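/- At t = 0, the interpolating free energy equals α̃_N(0) = log 2 + f(0,h;x,β), for every N ≥ 1, β ≥ 0, h ∈ ℝ, and every piecewise constant functional order parameter x with all m_a > 0, where f is the Parisi function. -/

import Mathlib

open MeasureTheory ProbabilityTheory Filter

noncomputable section

/-! ## Gaussian disorder -/

/-- The standard (centered, unit variance) Gaussian measure on `ℝ`. -/
def stdGauss : Measure ℝ := gaussianReal 0 1

instance : IsProbabilityMeasure stdGauss := by unfold stdGauss; infer_instance

/-- `N` i.i.d. standard Gaussian variables. -/
def gaussN (N : ℕ) : Measure (Fin N → ℝ) := Measure.pi fun _ => stdGauss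

instance (N : ℕ) : IsProbabilityMeasure (gaussN N) := by unfold gaussN; infer_instance

/-- The i.i.d. standard Gaussian couplings `J_{ij}` (only entries with `i < j` are used). -/
def gaussC (N : ℕ) : Measure (Fin N → Fin N → ℝ) := Measure.pi fun _ => gaussN N

instance (N : ℕ) : IsProbabilityMeasure (gaussC N) := by unfold gaussC; infer_instance

/-- The i.i.d. standard Gaussian one-body fields `J_i^a`, `a = 1, …, K`
(row `⟨a-1⟩ : Fin K` corresponds to the level `a` of the paper). -/
def gaussS (K N : ℕ) : Measure (Fin K → Fin N → ℝ) := Measure.pi fun _ => gaussN N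

instance (K N : ℕ) : IsProbabilityMeasure (gaussS K N) := by unfold gaussS; infer_instance

/-- I.i.d. standard Gaussian couplings indexed by subsets of sites, for the p-spin model
(only the cardinality-`p` subsets are used). -/
def gaussP (N : ℕ) : Measure (Finset (Fin N) → ℝ) := Measure.pi fun _ => stdGauss

instance (N : ℕ) : IsProbabilityMeasure (gaussP N) := by unfold gaussP; infer_instance

/-! ## Spins and overlaps -/

/-- The spin value (`±1`) of a Boolean configuration entry. -/
def spin (b : Bool) : ℝ := if b then 1 else -1

/-- The overlap `q₁₂ = N⁻¹ ∑ᵢ σᵢ⁽¹⁾ σᵢ⁽²⁾` of two replicas. -/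
def overlap (N : ℕ) (σ τ : Fin N → Bool) : ℝ := (N : ℝ)⁻¹ * ∑ i, spin (σ i) * spin (τ i)

/-! ## Piecewise constant functional order parameters and the Parisi function -/

/-- One backward step of the Parisi recursion on an interval of constancy of the
functional order parameter: from `g = f(q_a, ·)`, with value `m` of the order parameter
and `s = q_a - q`, produce `f(q, ·)`. -/
def pStep (m s : ℝ) (g : ℝ → ℝ) (y : ℝ) : ℝ :=
  if m = 0 then ∫ z, g (y + z * Real.sqrt s) ∂stdGauss
  else m⁻¹ * Real.log (∫ z, Real.exp (m * g (y + z * Real.sqrt s)) ∂stdGauss)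

/-- `parisiLevel K q m β j` is the Parisi function `f(q_{K-j}, ·; x, β)` at the node
`q_{K-j}`, obtained by `j` backward steps from the final condition `f(q_K, y) = log cosh (β y)`. -/
def parisiLevel (K : ℕ) (q m : ℕ → ℝ) (β : ℝ) : ℕ → ℝ → ℝ
  | 0 => fun y => Real.log (Real.cosh (β * y))
  | j + 1 => pStep (m (K - j)) (q (K - j) - q (K - j - 1)) (parisiLevel K q m β j)

/-- The Parisi function `f(r, y; x, β)` for a piecewise constant order parameter `x`
given by nodes `q` and values `m`:  for `q_{a-1} ≤ r ≤ q_a` it is obtained from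
`f(q_a, ·)` by one backward step with value `m_a` over a time `q_a - r`. -/
def parisiF (K : ℕ) (q m : ℕ → ℝ) (β : ℝ) (r y : ℝ) : ℝ :=
  pStep (m (sInf {a : ℕ | r ≤ q a})) (q (sInf {a : ℕ | r ≤ q a}) - r)
    (parisiLevel K q m β (K - sInf {a : ℕ | r ≤ q a})) y

/-- The functional order parameter as a function: `x(r) = m_a` for `q_{a-1} ≤ r < q_a`,
and `x(1) = m_K`. -/
def xFun (K : ℕ) (q m : ℕ → ℝ) (r : ℝ) : ℝ :=
  if 1 ≤ r then m K else m (sInf {a : ℕ | r < q a})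

/-- A piecewise constant functional order parameter:
`0 = q_0 ≤ q_1 ≤ … ≤ q_K = 1`, `0 ≤ m_1 ≤ … ≤ m_K ≤ 1`,
with the conventions `m_0 = 0`, `m_{K+1} = 1`. -/
structure OrderParam where
  K : ℕ
  hK : 1 ≤ K
  q : ℕ → ℝ
  m : ℕ → ℝ
  hq0 : q 0 = 0
  hqK : q K = 1
  hq_mono : ∀ a, a < K → q a ≤ q (a + 1)
  hm0 : m 0 = 0
  hmtop : m (K + 1) = 1
  hm1 : 0 ≤ m 1
  hm_mono : ∀ a, 1 ≤ a → a < K → m a ≤ m (a + 1)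
  hmK : m K ≤ 1

/-- Guerra's trial function `ᾱ(β, h; x) = log 2 + f(0, h; x, β) - (β²/2) ∫₀¹ r x(r) dr`. -/
def trialAlpha (K : ℕ) (q m : ℕ → ℝ) (β h : ℝ) : ℝ :=
  Real.log 2 + parisiLevel K q m β K h - β ^ 2 / 2 * ∫ r in (0 : ℝ)..1, r * xFun K q m r

/-! ## The Sherrington–Kirkpatrick model -/

/-- The SK Hamiltonian `H_N(σ, h, J) = -(1/√N) ∑_{i<j} J_{ij} σ_i σ_j - h ∑_i σ_i`. -/
def hamSK (N : ℕ) (h : ℝ) (Jc : Fin N → Fin N → ℝ) (σ : Fin N → Bool) : ℝ :=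
  -(1 / Real.sqrt N) * ∑ i, ∑ j, (if i < j then Jc i j * spin (σ i) * spin (σ j) else 0)
    - h * ∑ i, spin (σ i)

/-- The SK partition function `Z_N(β, h, J)`. -/
def ZSK (N : ℕ) (β h : ℝ) (Jc : Fin N → Fin N → ℝ) : ℝ :=
  ∑ σ : Fin N → Bool, Real.exp (-(β * hamSK N h Jc σ))

/-- The quenched average `N⁻¹ E log Z_N(β, h, J)`. -/
def quenchedFE (N : ℕ) (β h : ℝ) : ℝ :=
  (N : ℝ)⁻¹ * ∫ Jc, Real.log (ZSK N β h Jc) ∂gaussC N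

/-- The ground state energy density `e_N(J, h)`, defined by
`-e_N(J, h) = N⁻¹ min_σ H_N(σ, h, J)`. -/
def eGS (N : ℕ) (h : ℝ) (Jc : Fin N → Fin N → ℝ) : ℝ :=
  -((N : ℝ)⁻¹ * ⨅ σ : Fin N → Bool, hamSK N h Jc σ)

/-- The quenched ground state energy density `e_N(h) = E(e_N(J, h))`. -/
def eQuenched (N : ℕ) (h : ℝ) : ℝ := ∫ Jc, eGS N h Jc ∂gaussC N

/-! ## The interpolating system -/

/-- The interpolating Boltzmann factor. -/
def bFac (N K : ℕ) (β h t : ℝ) (q : ℕ → ℝ) (Jc : Fin N → Fin N → ℝ)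
    (Js : Fin K → Fin N → ℝ) (σ : Fin N → Bool) : ℝ :=
  Real.exp (β * Real.sqrt (t / N) *
        ∑ i, ∑ j, (if i < j then Jc i j * spin (σ i) * spin (σ j) else 0)
      + β * h * ∑ i, spin (σ i)
      + β * Real.sqrt (1 - t) *
          ∑ a : Fin K, Real.sqrt (q (a.val + 1) - q a.val) * ∑ i, Js a i * spin (σ i))

/-- The interpolating partition function `Z̃_N(β, h; t; x; J)`. -/
def Ztil (N K : ℕ) (β h t : ℝ) (q : ℕ → ℝ) (Jc : Fin N → Fin N → ℝ)
    (Js : Fin K → Fin N → ℝ) : ℝ :=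
  ∑ σ : Fin N → Bool, bFac N K β h t q Jc Js σ

/-- `Wrec … j` is the random variable `Z_{K-j}`:  `Z_K = Z̃_N` and
`Z_{a-1} = (E_a (Z_a^{m_a}))^{1/m_a}`, where `E_a` integrates the Gaussian row `J^a`. -/
def Wrec (N K : ℕ) (β h t : ℝ) (q m : ℕ → ℝ) :
    ℕ → (Fin N → Fin N → ℝ) → (Fin K → Fin N → ℝ) → ℝ
  | 0 => Ztil N K β h t q
  | j + 1 => fun Jc Js =>
      if hj : j < K then
        (∫ g : Fin N → ℝ,
            (Wrec N K β h t q m j Jc (Function.update Js ⟨K - 1 - j, by omega⟩ g)) ^ m (K - j)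
          ∂gaussN N) ^ (m (K - j))⁻¹
      else Wrec N K β h t q m j Jc Js

/-- `Zrec … a` is the random variable `Z_a` of the broken replica interpolation. -/
def Zrec (N K : ℕ) (β h t : ℝ) (q m : ℕ → ℝ) (a : ℕ) :
    (Fin N → Fin N → ℝ) → (Fin K → Fin N → ℝ) → ℝ :=
  Wrec N K β h t q m (K - a)

/-- The interpolating auxiliary function `α̃_N(t) = N⁻¹ E₀ log Z₀`. -/
def atilde (N K : ℕ) (β h : ℝ) (q m : ℕ → ℝ) (t : ℝ) : ℝ :=
  (N : ℝ)⁻¹ * ∫ Jc, Real.log (Wrec N K β h t q m K Jc 0) ∂gaussC N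

/-- The normalized weight `f_a = Z_a^{m_a} / E_a(Z_a^{m_a}) = Z_a^{m_a} / Z_{a-1}^{m_a}`. -/
def fWeight (N K : ℕ) (β h t : ℝ) (q m : ℕ → ℝ) (a : ℕ) (Jc : Fin N → Fin N → ℝ)
    (Js : Fin K → Fin N → ℝ) : ℝ :=
  Zrec N K β h t q m a Jc Js ^ m a / Zrec N K β h t q m (a - 1) Jc Js ^ m a

/-- The Gibbs expectation `ω(A)` of the interpolating Boltzmann factor. -/
def gibbs (N K : ℕ) (β h t : ℝ) (q : ℕ → ℝ) (A : (Fin N → Bool) → ℝ)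
    (Jc : Fin N → Fin N → ℝ) (Js : Fin K → Fin N → ℝ) : ℝ :=
  (∑ σ : Fin N → Bool, A σ * bFac N K β h t q Jc Js σ) / Ztil N K β h t q Jc Js

/-- The two-replica Gibbs product expectation `Ω(A)`. -/
def gibbs2 (N K : ℕ) (β h t : ℝ) (q : ℕ → ℝ) (A : (Fin N → Bool) → (Fin N → Bool) → ℝ)
    (Jc : Fin N → Fin N → ℝ) (Js : Fin K → Fin N → ℝ) : ℝ :=
  (∑ σ : Fin N → Bool, ∑ τ : Fin N → Bool,
      A σ τ * bFac N K β h t q Jc Js σ * bFac N K β h t q Jc Js τ) /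
    Ztil N K β h t q Jc Js ^ 2

/-- `omT1 … A j` is the partially averaged state `ω̃_{K-j}(A)`:
`ω̃_K = ω` and `ω̃_{a-1}(·) = E_a (f_a ω̃_a(·))`. -/
def omT1 (N K : ℕ) (β h t : ℝ) (q m : ℕ → ℝ) (A : (Fin N → Bool) → ℝ) :
    ℕ → (Fin N → Fin N → ℝ) → (Fin K → Fin N → ℝ) → ℝ
  | 0 => gibbs N K β h t q A
  | j + 1 => fun Jc Js =>
      if hj : j < K then
        ∫ g : Fin N → ℝ,
          fWeight N K β h t q m (K - j) Jc (Function.update Js ⟨K - 1 - j, by omega⟩ g) *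
            omT1 N K β h t q m A j Jc (Function.update Js ⟨K - 1 - j, by omega⟩ g)
          ∂gaussN N
      else omT1 N K β h t q m A j Jc Js

/-- `omT2 … A j` is the partially averaged two-replica state `Ω̃_{K-j}(A)`:
`Ω̃_K = Ω` and `Ω̃_{a-1}(·) = E_a (f_a Ω̃_a(·))`. -/
def omT2 (N K : ℕ) (β h t : ℝ) (q m : ℕ → ℝ) (A : (Fin N → Bool) → (Fin N → Bool) → ℝ) :
    ℕ → (Fin N → Fin N → ℝ) → (Fin K → Fin N → ℝ) → ℝ
  | 0 => gibbs2 N K β h t q A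
  | j + 1 => fun Jc Js =>
      if hj : j < K then
        ∫ g : Fin N → ℝ,
          fWeight N K β h t q m (K - j) Jc (Function.update Js ⟨K - 1 - j, by omega⟩ g) *
            omT2 N K β h t q m A j Jc (Function.update Js ⟨K - 1 - j, by omega⟩ g)
          ∂gaussN N
      else omT2 N K β h t q m A j Jc Js

/-- The deformed quenched average `⟨A⟩_a = E(f_1 ⋯ f_a Ω̃_a(A))` at interpolation
parameter `t`, for a function `A` of two replicas. -/
def angA (N K : ℕ) (β h t : ℝ) (q m : ℕ → ℝ) (a : ℕ)
    (A : (Fin N → Bool) → (Fin N → Bool) → ℝ) : ℝ :=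
  ∫ Jc, ∫ Js,
      (∏ b ∈ Finset.Icc 1 a, fWeight N K β h t q m b Jc Js) *
        omT2 N K β h t q m A (K - a) Jc Js
    ∂gaussS K N ∂gaussC N

/-! ## Zero temperature (ground state) objects -/

/-- The zero-temperature Parisi recursion: `parisiLevelBar K q m j` is `f̄(q_{K-j}, ·; x̄)`,
with final condition `f̄(q_K, y) = |y|`. -/
def parisiLevelBar (K : ℕ) (q m : ℕ → ℝ) : ℕ → ℝ → ℝ
  | 0 => fun y => |y|
  | j + 1 => pStep (m (K - j)) (q (K - j) - q (K - j - 1)) (parisiLevelBar K q m j)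

/-- A zero-temperature piecewise constant order parameter: nodes
`0 = q_0 ≤ … ≤ q_K = 1` and nondecreasing values `0 ≤ m̄_1 ≤ … ≤ m̄_K`
(no upper bound `1`), with the convention `m̄_0 = 0`. -/
structure ZeroTParam where
  K : ℕ
  hK : 1 ≤ K
  q : ℕ → ℝ
  m : ℕ → ℝ
  hq0 : q 0 = 0
  hqK : q K = 1
  hq_mono : ∀ a, a < K → q a ≤ q (a + 1)
  hm0 : m 0 = 0
  hm1 : 0 ≤ m 1
  hm_mono : ∀ a, 1 ≤ a → a < K → m a ≤ m (a + 1)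

/-- The zero-temperature trial function `α̃(h; x̄) = f̄(0, h; x̄) - (1/2) ∫₀¹ r x̄(r) dr`. -/
def gsTrial (K : ℕ) (q m : ℕ → ℝ) (h : ℝ) : ℝ :=
  parisiLevelBar K q m K h - 1 / 2 * ∫ r in (0 : ℝ)..1, r * xFun K q m r

/-! ## The p-spin model -/

/-- A piecewise constant functional order parameter on `[0, p/2]`:
`0 = q_0 ≤ … ≤ q_K = p/2` and `0 ≤ m_1 ≤ … ≤ m_K ≤ 1`. -/
structure POrderParam (p : ℕ) where
  K : ℕ
  hK : 1 ≤ K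
  q : ℕ → ℝ
  m : ℕ → ℝ
  hq0 : q 0 = 0
  hqK : q K = p / 2
  hq_mono : ∀ a, a < K → q a ≤ q (a + 1)
  hm1 : 0 ≤ m 1
  hm_mono : ∀ a, 1 ≤ a → a < K → m a ≤ m (a + 1)
  hmK : m K ≤ 1

/-- The p-spin Hamiltonian
`H_N(σ,h,J) = -(p!/(2N^{p-1}))^{1/2} ∑_{i_1<…<i_p} J_{i_1…i_p} σ_{i_1}⋯σ_{i_p} - h ∑_i σ_i`. -/
def hamP (p N : ℕ) (h : ℝ) (J : Finset (Fin N) → ℝ) (σ : Fin N → Bool) : ℝ :=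
  -Real.sqrt ((Nat.factorial p : ℝ) / (2 * (N : ℝ) ^ (p - 1))) *
      ∑ S ∈ Finset.powersetCard p (Finset.univ : Finset (Fin N)), J S * ∏ i ∈ S, spin (σ i)
    - h * ∑ i, spin (σ i)

/-- The p-spin partition function. -/
def ZP (p N : ℕ) (β h : ℝ) (J : Finset (Fin N) → ℝ) : ℝ :=
  ∑ σ : Fin N → Bool, Real.exp (-(β * hamP p N h J σ))

/-- The p-spin quenched average `N⁻¹ E log Z_N^{(p)}(β, h, J)`. -/
def quenchedFEP (p N : ℕ) (β h : ℝ) : ℝ :=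
  (N : ℝ)⁻¹ * ∫ J, Real.log (ZP p N β h J) ∂gaussP N

/-- The functional order parameter on `[0, p/2]` as a function. -/
def xFunP (p K : ℕ) (q m : ℕ → ℝ) (r : ℝ) : ℝ :=
  if (p : ℝ) / 2 ≤ r then m K else m (sInf {a : ℕ | r < q a})

/-- The change of variables `q̄(r)` defined by `2r = p q̄^{p-1}`. -/
def qBar (p : ℕ) (r : ℝ) : ℝ := (2 * r / p) ^ (((p : ℝ) - 1)⁻¹)

/-- The p-spin trial function
`ᾱ_p(β, h; x) = log 2 + f(0, h; x, β) - (β²/2) ∫₀^{p/2} q̄(r) x(r) dr`. -/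
def trialAlphaP (p K : ℕ) (q m : ℕ → ℝ) (β h : ℝ) : ℝ :=
  Real.log 2 + parisiLevel K q m β K h
    - β ^ 2 / 2 * ∫ r in (0 : ℝ)..((p : ℝ) / 2), qBar p r * xFunP p K q m r

/-! At `t = 0` the couplings `J_{ij}` drop out and the spins decouple, so `Z̃_N` is a product over
sites of `2 cosh (β u_i)`, where `u_i` is the sum of `h` and of the random fields at site `i`.
The map `Z ↦ (E_a Z ^ m_a) ^ (1 / m_a)` preserves products over independent sites, and on each
factor `2 exp (f(q_a, u_i))` it performs exactly one backward step of the Parisi recursion. After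
`K` steps all the fields have been integrated out and `Z_0 = (2 exp (f(0, h))) ^ N`. The exponential
moments involved are finite because `f(q_a, ·)` is Lipschitz. -/

section ExponentialMoments

variable {Ω : Type*} [MeasurableSpace Ω] {μ : Measure Ω}

lemma integrableExpSet_lipschitzWith_comp {X : Ω → ℝ} {g : ℝ → ℝ} {L : NNReal}
    (hX : integrableExpSet X μ = Set.univ) (hg : LipschitzWith L g) :
    integrableExpSet (fun ω ↦ g (X ω)) μ = Set.univ := by
  have hexp (t : ℝ) : Integrable (fun ω ↦ Real.exp (t * X ω)) μ := Set.eq_univ_iff_forall.1 hX t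
  have hX_meas : AEMeasurable X μ :=
    aemeasurable_of_integrable_exp_mul zero_ne_one (hexp 0) (hexp 1)
  refine Set.eq_univ_of_forall fun t ↦ ?_
  have hbound (ω : Ω) : t * g (X ω) ≤ |t| * |g 0| + |t| * L * |X ω| := by
    have hlip : |g (X ω) - g 0| ≤ L * |X ω| := by
      simpa [Real.dist_eq] using hg.dist_le_mul (X ω) 0
    calc t * g (X ω) ≤ |t| * |g (X ω)| := (le_abs_self _).trans_eq (abs_mul _ _)
      _ ≤ |t| * (|g 0| + L * |X ω|) := by
        gcongr
        linarith [abs_sub_abs_le_abs_sub (g (X ω)) (g 0)]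
      _ = |t| * |g 0| + |t| * L * |X ω| := by ring
  refine ((integrable_exp_mul_abs (hexp (|t| * L)) (hexp _)).const_mul
    (Real.exp (|t| * |g 0|))).mono' ?_ (ae_of_all _ fun ω ↦ ?_)
  · exact (Real.measurable_exp.comp_aemeasurable
      ((hg.continuous.measurable.comp_aemeasurable hX_meas).const_mul t)).aestronglyMeasurable
  · rw [Real.norm_of_nonneg (Real.exp_pos _).le, ← Real.exp_add]
    exact Real.exp_le_exp.2 (hbound ω)

lemma cgf_le_cgf_add [NeZero μ] {X Y : Ω → ℝ} {t C : ℝ}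
    (hX : Integrable (fun ω ↦ Real.exp (t * X ω)) μ)
    (hY : Integrable (fun ω ↦ Real.exp (t * Y ω)) μ)
    (hXY : ∀ᵐ ω ∂μ, t * X ω ≤ t * Y ω + C) :
    cgf X μ t ≤ cgf Y μ t + C := by
  rw [← Real.exp_le_exp, Real.exp_add, exp_cgf hX, exp_cgf hY, mgf, mgf, ← integral_mul_const]
  refine integral_mono_ae hX (hY.mul_const _) (hXY.mono fun ω hω ↦ ?_)
  dsimp only
  rw [← Real.exp_add]
  exact Real.exp_le_exp.2 hω

lemma abs_cgf_sub_cgf_le [NeZero μ] {X Y : Ω → ℝ} {t C : ℝ}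
    (hX : Integrable (fun ω ↦ Real.exp (t * X ω)) μ)
    (hY : Integrable (fun ω ↦ Real.exp (t * Y ω)) μ)
    (hXY : ∀ᵐ ω ∂μ, |X ω - Y ω| ≤ C) :
    |cgf X μ t - cgf Y μ t| ≤ |t| * C := by
  have hmul : ∀ᵐ ω ∂μ, |t * X ω - t * Y ω| ≤ |t| * C := hXY.mono fun ω hω ↦ by
    rw [← mul_sub, abs_mul]
    gcongr
  rw [abs_sub_le_iff, sub_le_iff_le_add', sub_le_iff_le_add']
  exact ⟨cgf_le_cgf_add hX hY (hmul.mono fun ω hω ↦ by linarith [(abs_le.1 hω).2]),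
    cgf_le_cgf_add hY hX (hmul.mono fun ω hω ↦ by linarith [(abs_le.1 hω).1])⟩

end ExponentialMoments

lemma integral_pi_prod_rpow_rpow_inv {ι : Type*} [Fintype ι] {E : ι → Type*}
    [∀ i, MeasurableSpace (E i)] {μ : ∀ i, Measure (E i)} [∀ i, SigmaFinite (μ i)]
    {f : ∀ i, E i → ℝ} (hf : ∀ i x, 0 ≤ f i x) (m : ℝ) :
    (∫ x, (∏ i, f i (x i)) ^ m ∂Measure.pi μ) ^ m⁻¹ =
      ∏ i, (∫ x, f i x ^ m ∂μ i) ^ m⁻¹ := by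
  simp_rw [← Real.finsetProd_rpow _ _ fun i _ ↦ hf i _]
  rw [integral_fintype_prod_eq_prod fun i x ↦ f i x ^ m,
    Real.finsetProd_rpow _ _ fun i _ ↦ integral_nonneg fun x ↦ Real.rpow_nonneg (hf i x) m]

lemma lipschitzWith_log_cosh : LipschitzWith 1 fun x ↦ Real.log (Real.cosh x) := by
  refine lipschitzWith_of_nnnorm_deriv_le
    (Real.differentiable_cosh.log fun x ↦ (Real.cosh_pos x).ne') fun x ↦ ?_
  have hderiv : deriv (fun x ↦ Real.log (Real.cosh x)) x = Real.tanh x := by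
    rw [← Real.logDeriv_cosh]
    exact Real.deriv_log_comp_eq_logDeriv Real.differentiableAt_cosh (Real.cosh_pos x).ne'
  rw [hderiv]
  exact (Real.abs_tanh_lt_one x).le

section ParisiRecursion

variable {L : NNReal} {g : ℝ → ℝ}

lemma integrableExpSet_stdGauss_of_lipschitzWith (hg : LipschitzWith L g) (s y : ℝ) :
    integrableExpSet (fun z ↦ g (y + z * Real.sqrt s)) stdGauss = Set.univ := by
  have hX : integrableExpSet (fun z ↦ y + z * Real.sqrt s) stdGauss = Set.univ :=
    integrableExpSet_lipschitzWith_comp (X := id) (g := fun z ↦ y + z * Real.sqrt s)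
      integrableExpSet_id_gaussianReal
      (LipschitzWith.of_dist_le_mul (K := ‖Real.sqrt s‖₊) fun a b ↦ by
        rw [dist_add_left, Real.dist_eq, Real.dist_eq, ← sub_mul, abs_mul, mul_comm,
          coe_nnnorm, Real.norm_eq_abs])
  exact integrableExpSet_lipschitzWith_comp hX hg

lemma integrable_exp_mul_stdGauss_of_lipschitzWith (hg : LipschitzWith L g) (t s y : ℝ) :
    Integrable (fun z ↦ Real.exp (t * g (y + z * Real.sqrt s))) stdGauss :=
  Set.eq_univ_iff_forall.1 (integrableExpSet_stdGauss_of_lipschitzWith hg s y) t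

lemma integrable_stdGauss_of_lipschitzWith (hg : LipschitzWith L g) (s y : ℝ) :
    Integrable (fun z ↦ g (y + z * Real.sqrt s)) stdGauss :=
  integrable_of_mem_interior_integrableExpSet <| by
    simp [integrableExpSet_stdGauss_of_lipschitzWith hg]

lemma pStep_eq_inv_mul_cgf {m : ℝ} (hm : m ≠ 0) (s : ℝ) (g : ℝ → ℝ) (y : ℝ) :
    pStep m s g y = m⁻¹ * cgf (fun z ↦ g (y + z * Real.sqrt s)) stdGauss m :=
  if_neg hm

lemma lipschitzWith_pStep (hg : LipschitzWith L g) (m s : ℝ) :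
    LipschitzWith L (pStep m s g) := by
  refine LipschitzWith.of_dist_le_mul fun x y ↦ ?_
  have hdiff (z : ℝ) :
      |g (x + z * Real.sqrt s) - g (y + z * Real.sqrt s)| ≤ L * dist x y := by
    simpa [Real.dist_eq] using hg.dist_le_mul (x + z * Real.sqrt s) (y + z * Real.sqrt s)
  rw [Real.dist_eq]
  rcases eq_or_ne m 0 with rfl | hm
  · simp only [pStep, if_true]
    rw [← integral_sub (integrable_stdGauss_of_lipschitzWith hg s x)
      (integrable_stdGauss_of_lipschitzWith hg s y)]
    simpa only [Real.norm_eq_abs, probReal_univ, mul_one] using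
      norm_integral_le_of_norm_le_const
        (ae_of_all stdGauss fun z ↦ (Real.norm_eq_abs _).trans_le (hdiff z))
  · have hcgf := abs_cgf_sub_cgf_le (integrable_exp_mul_stdGauss_of_lipschitzWith hg m s x)
      (integrable_exp_mul_stdGauss_of_lipschitzWith hg m s y) (ae_of_all _ hdiff)
    rw [pStep_eq_inv_mul_cgf hm, pStep_eq_inv_mul_cgf hm, ← mul_sub, abs_mul, abs_inv]
    exact (inv_mul_le_iff₀ (abs_pos.2 hm)).2 hcgf

lemma lipschitzWith_parisiLevel (K : ℕ) (q m : ℕ → ℝ) (β : ℝ) (j : ℕ) :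
    LipschitzWith ‖β‖₊ (parisiLevel K q m β j) := by
  induction j with
  | zero =>
    rw [← one_mul ‖β‖₊]
    exact lipschitzWith_log_cosh.comp (lipschitzWith_smul β)
  | succ j ih => exact lipschitzWith_pStep ih _ _

lemma integral_mul_exp_rpow_rpow_inv_eq_exp_pStep (hg : LipschitzWith L g) {c m : ℝ} (hc : 0 ≤ c)
    (hm : m ≠ 0) (s y : ℝ) :
    (∫ z, (c * Real.exp (g (y + z * Real.sqrt s))) ^ m ∂stdGauss) ^ m⁻¹ =
      c * Real.exp (pStep m s g y) := by
  have hint : ∫ z, (c * Real.exp (g (y + z * Real.sqrt s))) ^ m ∂stdGauss =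
      c ^ m * Real.exp (cgf (fun z ↦ g (y + z * Real.sqrt s)) stdGauss m) := by
    rw [exp_cgf (integrable_exp_mul_stdGauss_of_lipschitzWith hg m s y), mgf,
      ← integral_const_mul]
    congr with z
    rw [Real.mul_rpow hc (Real.exp_pos _).le, ← Real.exp_mul, mul_comm m]
  rw [hint, Real.mul_rpow (Real.rpow_nonneg hc m) (Real.exp_pos _).le,
    Real.rpow_rpow_inv hc hm, ← Real.exp_mul, mul_comm _ m⁻¹, pStep_eq_inv_mul_cgf hm]

end ParisiRecursion

lemma sum_prod_exp_mul_spin {ι : Type*} [Fintype ι] [DecidableEq ι] (x : ι → ℝ) :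
    ∑ σ : ι → Bool, ∏ i, Real.exp (x i * spin (σ i)) = ∏ i, (2 * Real.cosh (x i)) := by
  rw [← Fintype.prod_sum fun i b ↦ Real.exp (x i * spin b)]
  refine Finset.prod_congr rfl fun i _ ↦ ?_
  simp only [spin, Fintype.sum_bool, Bool.false_eq_true, if_true, if_false, mul_one, mul_neg_one,
    Real.cosh_eq]
  ring

section DecoupledSystem

variable {N K : ℕ}

/-- The field `h + ∑_{a ≤ n} √(q_a - q_{a-1}) J_i^a` acting on the site `i`, where only the first
`n` rows of random fields are kept; the rows above `n` are those already integrated out when the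
recursion has reached `Z_n`. -/
def localField (q : ℕ → ℝ) (h : ℝ) (n : ℕ) (Js : Fin K → Fin N → ℝ) (i : Fin N) : ℝ :=
  h + ∑ a : Fin K with a.val < n, Real.sqrt (q (a.val + 1) - q a.val) * Js a i

lemma localField_zero (q : ℕ → ℝ) (h : ℝ) (Js : Fin K → Fin N → ℝ) (i : Fin N) :
    localField q h 0 Js i = h := by
  simp [localField]

lemma localField_succ_update (q : ℕ → ℝ) (h : ℝ) (n : Fin K) (Js : Fin K → Fin N → ℝ)
    (g : Fin N → ℝ) (i : Fin N) :
    localField q h (n + 1) (Function.update Js n g) i =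
      localField q h n Js i + g i * Real.sqrt (q (n + 1) - q n) := by
  have hrows : Finset.univ.filter (fun a : Fin K ↦ a.val < n.val + 1) =
      insert n (Finset.univ.filter fun a : Fin K ↦ a.val < n.val) := by
    ext a
    simp only [Finset.mem_filter_univ, Finset.mem_insert, Fin.ext_iff]
    omega
  have hbelow : ∑ a : Fin K with a.val < n.val,
        Real.sqrt (q (a.val + 1) - q a.val) * Function.update Js n g a i =
      ∑ a : Fin K with a.val < n.val, Real.sqrt (q (a.val + 1) - q a.val) * Js a i := by
    refine Finset.sum_congr rfl fun a ha ↦ ?_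
    have hne : a ≠ n := Fin.ne_of_lt ((Finset.mem_filter_univ a).1 ha)
    rw [Function.update_of_ne hne]
  rw [localField, hrows, Finset.sum_insert (by simp), hbelow, Function.update_self, localField]
  ring

lemma bFac_time_zero (β h : ℝ) (q : ℕ → ℝ) (Jc : Fin N → Fin N → ℝ) (Js : Fin K → Fin N → ℝ)
    (σ : Fin N → Bool) :
    bFac N K β h 0 q Jc Js σ = ∏ i, Real.exp (β * localField q h K Js i * spin (σ i)) := by
  have hfields : ∑ i, (∑ a : Fin K, Real.sqrt (q (a.val + 1) - q a.val) * Js a i) * spin (σ i) =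
      ∑ a : Fin K, Real.sqrt (q (a.val + 1) - q a.val) * ∑ i, Js a i * spin (σ i) := by
    simp_rw [Finset.mul_sum, Finset.sum_mul, mul_assoc]
    exact Finset.sum_comm
  rw [← Real.exp_sum, bFac, ← hfields]
  simp only [localField, Fin.is_lt, Finset.filter_true, zero_div, sub_zero, Real.sqrt_zero,
    Real.sqrt_one, mul_zero, zero_mul, zero_add, mul_one]
  rw [Finset.mul_sum, Finset.mul_sum, ← Finset.sum_add_distrib]
  exact congrArg Real.exp (Finset.sum_congr rfl fun i _ ↦ by ring)

lemma Ztil_time_zero (β h : ℝ) (q : ℕ → ℝ) (Jc : Fin N → Fin N → ℝ) (Js : Fin K → Fin N → ℝ) :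
    Ztil N K β h 0 q Jc Js = ∏ i, (2 * Real.cosh (β * localField q h K Js i)) := by
  simp_rw [Ztil, bFac_time_zero]
  exact sum_prod_exp_mul_spin _

lemma Wrec_time_zero {m : ℕ → ℝ} (hm : ∀ a, 1 ≤ a → a ≤ K → m a ≠ 0) (q : ℕ → ℝ) (β h : ℝ)
    {j : ℕ} (hj : j ≤ K) (Jc : Fin N → Fin N → ℝ) (Js : Fin K → Fin N → ℝ) :
    Wrec N K β h 0 q m j Jc Js =
      ∏ i, (2 * Real.exp (parisiLevel K q m β j (localField q h (K - j) Js i))) := by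
  induction j generalizing Js with
  | zero =>
    simp only [Wrec, parisiLevel, Real.exp_log (Real.cosh_pos _), Nat.sub_zero]
    exact Ztil_time_zero β h q Jc Js
  | succ j ih =>
    obtain ⟨n, hn⟩ : ∃ n : Fin K, K - j = n.val + 1 := ⟨⟨K - 1 - j, by omega⟩, by dsimp; omega⟩
    have hrow : (⟨K - 1 - j, by omega⟩ : Fin K) = n := Fin.ext (by dsimp; omega)
    have hprev : K - (j + 1) = n := by omega
    simp only [Wrec, dif_pos (Nat.lt_of_succ_le hj), ih (Nat.le_of_succ_le hj), hrow, hn, hprev,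
      localField_succ_update, gaussN]
    rw [integral_pi_prod_rpow_rpow_inv (f := fun i z ↦ 2 * Real.exp (parisiLevel K q m β j
      (localField q h n Js i + z * Real.sqrt (q (n + 1) - q n)))) fun i z ↦ by positivity]
    refine Finset.prod_congr rfl fun i _ ↦ ?_
    rw [integral_mul_exp_rpow_rpow_inv_eq_exp_pStep (lipschitzWith_parisiLevel K q m β j)
      zero_le_two (hm _ n.val.succ_pos n.isLt), parisiLevel, hn, Nat.add_sub_cancel]

end DecoupledSystem

theorem atilde_at_zero_general {N K : ℕ} (hN : N ≠ 0) {q m : ℕ → ℝ}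
    (_hq : ∀ a, a < K → q a ≤ q (a + 1)) (hm : ∀ a, 1 ≤ a → a ≤ K → m a ≠ 0) (β h : ℝ) :
    atilde N K β h q m 0 = Real.log 2 + parisiLevel K q m β K h := by
  have hZ₀ (Jc : Fin N → Fin N → ℝ) :
      Real.log (Wrec N K β h 0 q m K Jc 0) = N * (Real.log 2 + parisiLevel K q m β K h) := by
    rw [Wrec_time_zero hm q β h le_rfl, Nat.sub_self]
    simp only [localField_zero, Finset.prod_const, Finset.card_univ, Fintype.card_fin]
    rw [Real.log_pow, Real.log_mul two_ne_zero (Real.exp_ne_zero _), Real.log_exp]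
  simp only [atilde, hZ₀, integral_const, probReal_univ, one_smul]
  exact inv_mul_cancel_left₀ (Nat.cast_ne_zero.2 hN) _

/-- at `t = 0` the interpolating free energy equals
`α̃_N(0) = log 2 + f(0, h; x, β)`, for every `N ≥ 1`, `β ≥ 0`, `h ∈ ℝ`, and every
piecewise constant functional order parameter with all `m_a > 0`; here
`f(0, h; x, β) = parisiLevel X.K X.q X.m β X.K h` is the Parisi function at `q = 0`. -/
theorem atilde_at_zero (N : ℕ) (hN : 1 ≤ N) (X : OrderParam)
    (hm : ∀ a, 1 ≤ a → a ≤ X.K → 0 < X.m a) (β h : ℝ) (hβ : 0 ≤ β) :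
    atilde N X.K β h X.q X.m 0 = Real.log 2 + parisiLevel X.K X.q X.m β X.K h :=
  atilde_at_zero_general (Nat.one_le_iff_ne_zero.1 hN) X.hq_mono
    (fun a h₁ hK ↦ (hm a h₁ hK).ne') β h

end
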